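/- Let A and B be tuples of complex numbers all of whose entries have real part of absolute value less than 1/16, with distinguished entries α̂ of A and β̂ of B, and write A′ = A minus α̂, B′ = B minus β̂. Then for every complex s with ℜs > 1/4, the double series Σ_{d≥1} Σ_{q≥1} μ(q) G_A(1−α̂, qd) G_B(1−β̂, qd) d^{−1−s} q^{−2+α̂+β̂} converges absolutely and equals ∏_{a∈A′, b∈B′} ζ(1+s+a+b) × ∏_p [ ∏_{a∈A′, b∈B′}(1 − p^{−1−a−b−s}) · Σ_{d≥0} Σ_{q=0}^{1} (−1)^q G_A(1−α̂, p^{d+q}) G_B(1−β̂, p^{d+q}) p^{−d−ds − q(2−α̂−β̂)} ], where the product over primes p converges absolutely. -/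

import Mathlib

open Complex

/-- Shifted divisor function: `tauSh A n = ∑_{n₁⋯n_k = n} n₁^{-α₁}⋯n_k^{-α_k}`,
defined by iterated Dirichlet convolution. -/
noncomputable def tauSh : List ℂ → ℕ → ℂ
  | [], n => if n = 1 then 1 else 0
  | a :: A, n => ∑ d ∈ n.divisors, (d : ℂ) ^ (-a) * tauSh A (n / d)

/-- `g_A(s,q) = ∏_{p ∣ q} ( ∏_{α∈A} (1 − p^{−s−α}) · ∑_{j≥0} τ_A(p^{j+q_p}) p^{−js} )`. -/
noncomputable def gSh (A : List ℂ) (s : ℂ) (q : ℕ) : ℂ :=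
  ∏ p ∈ q.primeFactors,
    ((A.map (fun α => 1 - (p : ℂ) ^ (-s - α))).prod *
      ∑' j : ℕ, tauSh A (p ^ (j + q.factorization p)) * (p : ℂ) ^ (-(j : ℂ) * s))

/-- `G_A(s,q) = ∑_{d∣q} (μ(d)/φ(d)) d^s ∑_{e∣d} (μ(e)/e^s) g_A(s, qe/d)`. -/
noncomputable def GSh (A : List ℂ) (s : ℂ) (q : ℕ) : ℂ :=
  ∑ d ∈ q.divisors, ((ArithmeticFunction.moebius d : ℂ) / (Nat.totient d : ℂ)) * (d : ℂ) ^ s *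
    ∑ e ∈ d.divisors, (ArithmeticFunction.moebius e : ℂ) / (e : ℂ) ^ s * gSh A s (q * e / d)

/-!
The point of evaluating `G_A` at `s = 1 - α̂` is that on prime powers the entry `α̂` drops out:
`G_A(1 - α̂, p^k)` is the `k`-th tail of `∑ τ_{A'}(p^j) p^{-j(1 - α̂)}` divided by the whole series.
Hence it is `O(p^{kθ})` as soon as all entries of `A` have real part greater than `-θ`. The double
series is a sum over `n = qd` of a multiplicative coefficient, and a nonnegative multiplicative
function is summable once it is summable over the prime powers, because its partial sums are at most
`∏_p (1 + ∑_{k ≥ 1} f(p^k)) ≤ exp (∑_{p, k ≥ 1} f(p^k))`. Absolute convergence gives the Euler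
product, and the factors `1 - p^{-1-a-b-s}` multiply out to the inverses of the values of `ζ`.
-/

lemma natCast_pow_cpow (n k : ℕ) (z : ℂ) : ((n ^ k : ℕ) : ℂ) ^ z = ((n : ℂ) ^ z) ^ k := by
  rw [Nat.cast_pow, ← natCast_cpow_natCast_mul, cpow_nat_mul]

lemma forall_mem_append_of_forall_mem_append_cons {α : Type*} {P : α → Prop} {L M : List α} {a : α}
    (h : ∀ x ∈ L ++ a :: M, P x) : ∀ x ∈ L ++ M, P x :=
  fun x hx => h x (((List.sublist_cons_self a M).append_left L).subset hx)

lemma sum_divisors_mul_of_coprime {R : Type*} [CommSemiring R] {m n : ℕ} (h : m.Coprime n)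
    {F f g : ℕ → R} (hF : ∀ d ∈ m.divisors, ∀ e ∈ n.divisors, F (d * e) = f d * g e) :
    ∑ d ∈ (m * n).divisors, F d = (∑ d ∈ m.divisors, f d) * ∑ e ∈ n.divisors, g e := by
  rw [Nat.divisors_mul, Finset.mul_def, Finset.sum_image h.mul_injOn_divisors,
    Finset.sum_mul_sum, ← Finset.sum_product']
  refine Finset.sum_congr rfl fun x hx => ?_
  exact hF _ (Finset.mem_product.1 hx).1 _ (Finset.mem_product.1 hx).2

lemma sum_divisors_prime_pow_succ_of_eq_zero {R : Type*} [AddCommMonoid R] {p : ℕ} (hp : p.Prime)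
    (k : ℕ) {f : ℕ → R} (hf : ∀ i, f (p ^ (i + 2)) = 0) :
    ∑ d ∈ (p ^ (k + 1)).divisors, f d = f 1 + f p := by
  rw [Nat.sum_divisors_prime_pow hp, Finset.sum_range_succ', Finset.sum_range_succ',
    Finset.sum_eq_zero fun i _ => hf i]
  simp [add_comm]

lemma moebius_prime_pow_add_two {p : ℕ} (hp : p.Prime) (i : ℕ) :
    ArithmeticFunction.moebius (p ^ (i + 2)) = 0 := by
  rw [ArithmeticFunction.moebius_apply_prime_pow hp (by omega), if_neg (by omega)]

lemma arithmeticFunction_mul_apply_prime_pow {R : Type*} [Semiring R] (a b : ArithmeticFunction R)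
    {p : ℕ} (hp : p.Prime) (k : ℕ) :
    (a * b) (p ^ k) = ∑ x ∈ Finset.HasAntidiagonal.antidiagonal k, a (p ^ x.1) * b (p ^ x.2) := by
  rw [ArithmeticFunction.mul_apply, Nat.sum_divisorsAntidiagonal (fun x y => a x * b y),
    Nat.sum_divisors_prime_pow hp,
    Finset.Nat.sum_antidiagonal_eq_sum_range_succ (fun i j => a (p ^ i) * b (p ^ j))]
  refine Finset.sum_congr rfl fun i hi => ?_
  rw [Nat.pow_div (Nat.lt_succ_iff.1 (Finset.mem_range.1 hi)) hp.pos]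

section EulerFactors

lemma tsum_prime_pow_le_exp {f : ArithmeticFunction ℝ} (hf : f.IsMultiplicative) {p : ℕ}
    (hsum : Summable fun k => f (p ^ (k + 1))) :
    ∑' k, f (p ^ k) ≤ Real.exp (∑' k, f (p ^ (k + 1))) := by
  have hall : Summable fun k => f (p ^ k) :=
    (summable_nat_add_iff (f := fun k => f (p ^ k)) 1).1 hsum
  rw [hall.tsum_eq_zero_add, pow_zero, hf.map_one, add_comm]
  exact Real.add_one_le_exp _

lemma sum_primesBelow_le_tsum_primes {f : ℕ → ℝ} (hsum : Summable fun p : Nat.Primes => f p)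
    (hf0 : ∀ n, 0 ≤ f n) (N : ℕ) : ∑ p ∈ N.primesBelow, f p ≤ ∑' p : Nat.Primes, f p := by
  let S : Finset Nat.Primes := N.primesBelow.subtype Nat.Prime
  have hS : ∑ p ∈ S, f p = ∑ p ∈ N.primesBelow, f p :=
    Finset.sum_subtype_of_mem f fun p hp => Nat.prime_of_mem_primesBelow hp
  exact hS ▸ hsum.sum_le_tsum S fun p _ => hf0 p

lemma sum_range_le_prod_primesBelow_tsum {f : ArithmeticFunction ℝ} (hf : f.IsMultiplicative)
    (hf0 : ∀ n, 0 ≤ f n) (hsum : ∀ p : ℕ, p.Prime → Summable fun k => f (p ^ k)) (N : ℕ) :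
    ∑ n ∈ Finset.range N, f n ≤ ∏ p ∈ N.primesBelow, ∑' k, f (p ^ k) := by
  have hsmooth := (EulerProduct.summable_and_hasSum_smoothNumbers_prod_primesBelow_tsum
    hf.map_one hf.map_mul_of_coprime (fun {p} hp => (hsum p hp).norm) N).2
  calc ∑ n ∈ Finset.range N, f n
      = ∑ n ∈ Finset.range N, N.smoothNumbers.indicator f n := by
        refine Finset.sum_congr rfl fun n hn => ?_
        rcases Nat.eq_zero_or_pos n with rfl | hpos
        · simp [Set.indicator_apply]
        · rw [Set.indicator_of_mem (Nat.mem_smoothNumbers_of_lt hpos (Finset.mem_range.1 hn))]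
    _ ≤ ∏ p ∈ N.primesBelow, ∑' k, f (p ^ k) :=
        sum_le_hasSum _ (fun n _ => Set.indicator_nonneg (fun n _ => hf0 n) n)
          (hasSum_subtype_iff_indicator.1 hsmooth)

lemma summable_of_summable_isPrimePow {f : ArithmeticFunction ℝ} (hf : f.IsMultiplicative)
    (hf0 : ∀ n, 0 ≤ f n) (hsum : Summable fun n : {n : ℕ // IsPrimePow n} => f (n : ℕ)) :
    Summable f := by
  let tail (p : ℕ) : ℝ := ∑' k, f (p ^ (k + 1))
  have hpk : Summable fun x : Nat.Primes × ℕ => f ((x.1 : ℕ) ^ (x.2 + 1)) :=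
    (hsum.comp_injective Nat.Primes.prodNatEquiv.injective).congr fun x =>
      congrArg f (Nat.Primes.coe_prodNatEquiv_apply x.1 x.2)
  have htails : Summable fun p : Nat.Primes => tail p := hpk.prod
  have htail (p : ℕ) (hp : p.Prime) : Summable fun k => f (p ^ (k + 1)) :=
    hpk.prod_factor (⟨p, hp⟩ : Nat.Primes)
  have hfactor (p : ℕ) (hp : p.Prime) : Summable fun k => f (p ^ k) :=
    (summable_nat_add_iff (f := fun k => f (p ^ k)) 1).1 (htail p hp)
  refine summable_of_sum_range_le (c := Real.exp (∑' p : Nat.Primes, tail p)) hf0 fun N => ?_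
  calc ∑ n ∈ Finset.range N, f n
      ≤ ∏ p ∈ N.primesBelow, ∑' k, f (p ^ k) :=
        sum_range_le_prod_primesBelow_tsum hf hf0 hfactor N
    _ ≤ ∏ p ∈ N.primesBelow, Real.exp (tail p) :=
        Finset.prod_le_prod (fun p _ => tsum_nonneg fun _ => hf0 _) fun p hp =>
          tsum_prime_pow_le_exp hf (htail p (Nat.prime_of_mem_primesBelow hp))
    _ = Real.exp (∑ p ∈ N.primesBelow, tail p) := (Real.exp_sum _ _).symm
    _ ≤ Real.exp (∑' p : Nat.Primes, tail p) := Real.exp_le_exp.2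
        (sum_primesBelow_le_tsum_primes htails (fun p => tsum_nonneg fun k => hf0 _) N)

lemma summable_norm_eulerFactor_sub_one {𝕜 : Type*} [NormedField 𝕜] [CompleteSpace 𝕜]
    {f : ArithmeticFunction 𝕜} (hf : f 1 = 1) (hsum : Summable fun n => ‖f n‖) :
    Summable fun p : Nat.Primes => ‖(∑' k, f ((p : ℕ) ^ k)) - 1‖ := by
  have hpk : Summable fun x : Nat.Primes × ℕ => ‖f ((x.1 : ℕ) ^ (x.2 + 1))‖ :=
    hsum.comp_injective (Subtype.val_injective.comp Nat.Primes.prodNatEquiv.injective)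
  have htails : Summable fun p : Nat.Primes => ∑' k, ‖f ((p : ℕ) ^ (k + 1))‖ := hpk.prod
  refine htails.of_nonneg_of_le (fun _ => norm_nonneg _) fun p => ?_
  have htail : Summable fun k => ‖f ((p : ℕ) ^ (k + 1))‖ := hpk.prod_factor p
  have hall : Summable fun k => f ((p : ℕ) ^ k) :=
    (summable_nat_add_iff (f := fun k => f ((p : ℕ) ^ k)) 1).1 htail.of_norm
  rw [hall.tsum_eq_zero_add, pow_zero, hf, add_sub_cancel_left]
  exact norm_tsum_le_tsum_norm htail

end EulerFactors

section DoubleSeries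

variable {𝕜 : Type*} [NormedField 𝕜]

/-- The pointwise norm of an arithmetic function, again as an arithmetic function, so that absolute
convergence of twisted Dirichlet convolutions can be tested on the convolution of the norms. -/
def normArith (f : ArithmeticFunction 𝕜) : ArithmeticFunction ℝ :=
  ⟨fun n => ‖f n‖, by simp⟩

@[simp]
lemma normArith_apply (f : ArithmeticFunction 𝕜) (n : ℕ) : normArith f n = ‖f n‖ := rfl

lemma isMultiplicative_normArith {f : ArithmeticFunction 𝕜} (hf : f.IsMultiplicative) :
    (normArith f).IsMultiplicative :=
  ⟨by simp [hf.map_one], fun hmn => by simp [hf.map_mul_of_coprime hmn]⟩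

lemma normArith_mul_normArith_nonneg (a b : ArithmeticFunction 𝕜) (n : ℕ) :
    0 ≤ (normArith a * normArith b) n := by
  rw [ArithmeticFunction.mul_apply]
  exact Finset.sum_nonneg fun x _ => mul_nonneg (norm_nonneg (a x.1)) (norm_nonneg (b x.2))

lemma norm_pmul_mul_apply_le (K a b : ArithmeticFunction 𝕜) (n : ℕ) :
    ‖K.pmul (a * b) n‖ ≤ (normArith K).pmul (normArith a * normArith b) n := by
  simp only [ArithmeticFunction.pmul_apply, ArithmeticFunction.mul_apply, norm_mul,
    normArith_apply]
  gcongr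
  exact (norm_sum_le _ _).trans_eq (Finset.sum_congr rfl fun x _ => norm_mul _ _)

lemma hasSum_mul_eq_pmul_mul {R : Type*} [CommSemiring R] [TopologicalSpace R]
    (K a b : ArithmeticFunction R) (n : ℕ) :
    HasSum (fun x : (fun x : ℕ × ℕ => x.1 * x.2) ⁻¹' {n} => K (x.1.1 * x.1.2) * (a x.1.1 * b x.1.2))
      (K.pmul (a * b) n) := by
  rcases Nat.eq_zero_or_pos n with rfl | hn
  · have hzero (x : (fun x : ℕ × ℕ => x.1 * x.2) ⁻¹' {0}) :
        K (x.1.1 * x.1.2) * (a x.1.1 * b x.1.2) = 0 := by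
      have hx : x.1.1 * x.1.2 = 0 := x.2
      rw [hx, ArithmeticFunction.map_zero, zero_mul]
    simpa only [hzero, ArithmeticFunction.map_zero] using hasSum_zero (α := R)
  · have hfiber : (fun x : ℕ × ℕ => x.1 * x.2) ⁻¹' {n} = ↑n.divisorsAntidiagonal := by
      ext x
      simp [hn.ne']
    rw [hfiber, ArithmeticFunction.pmul_apply, ArithmeticFunction.mul_apply, Finset.mul_sum]
    have hterm : ∑ x ∈ n.divisorsAntidiagonal, K n * (a x.1 * b x.2) =
        ∑ x ∈ n.divisorsAntidiagonal, K (x.1 * x.2) * (a x.1 * b x.2) :=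
      Finset.sum_congr rfl fun x hx => by rw [(Nat.mem_divisorsAntidiagonal.1 hx).1]
    rw [hterm]
    exact Finset.hasSum n.divisorsAntidiagonal fun x => K (x.1 * x.2) * (a x.1 * b x.2)

variable {K a b : ArithmeticFunction 𝕜}
  (hsum : Summable ((normArith K).pmul (normArith a * normArith b)))
include hsum

lemma summable_norm_double_series :
    Summable fun x : ℕ × ℕ => ‖K (x.1 * x.2) * (a x.1 * b x.2)‖ := by
  have hfiber := hasSum_mul_eq_pmul_mul (normArith K) (normArith a) (normArith b)
  simp only [normArith_apply, ← norm_mul] at hfiber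
  refine (summable_partition (fun _ => norm_nonneg _)
    (s := fun n => (fun x : ℕ × ℕ => x.1 * x.2) ⁻¹' {n}) fun x => by simp).2
    ⟨fun n => (hfiber n).summable, ?_⟩
  simpa only [(hfiber _).tsum_eq] using hsum

variable [CompleteSpace 𝕜]

lemma tsum_double_series :
    ∑' x : ℕ × ℕ, K (x.1 * x.2) * (a x.1 * b x.2) = ∑' n, K.pmul (a * b) n := by
  rw [← ((summable_norm_double_series hsum).of_norm.hasSum.tsum_fiberwise
    fun x : ℕ × ℕ => x.1 * x.2).tsum_eq]
  exact tsum_congr fun n => (hasSum_mul_eq_pmul_mul K a b n).tsum_eq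

lemma tsum_pmul_mul_prime_pow {p : ℕ} (hp : p.Prime) :
    ∑' k, K.pmul (a * b) (p ^ k) =
      ∑' d, ∑' q, K (p ^ (d + q)) * (a (p ^ d) * b (p ^ q)) := by
  have hinj : Function.Injective fun x : ℕ × ℕ => (p ^ x.1, p ^ x.2) :=
    Function.Injective.prodMap (Nat.pow_right_injective hp.two_le)
      (Nat.pow_right_injective hp.two_le)
  have hprod : Summable fun x : ℕ × ℕ => K (p ^ (x.1 + x.2)) * (a (p ^ x.1) * b (p ^ x.2)) := by
    simpa only [Function.comp_def, pow_add] using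
      ((summable_norm_double_series hsum).of_norm.comp_injective hinj)
  have hsigma := Finset.HasAntidiagonal.sigmaAntidiagonalEquivProd.summable_iff.2 hprod
  rw [← hprod.tsum_prod]
  refine Eq.trans ?_ (hsigma.tsum_sigma.symm.trans
    (Finset.HasAntidiagonal.sigmaAntidiagonalEquivProd.tsum_eq
      fun x : ℕ × ℕ => K (p ^ (x.1 + x.2)) * (a (p ^ x.1) * b (p ^ x.2))))
  refine tsum_congr fun k => ?_
  rw [ArithmeticFunction.pmul_apply, arithmeticFunction_mul_apply_prime_pow a b hp,
    Finset.mul_sum, tsum_fintype, ← Finset.sum_coe_sort]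
  refine Finset.sum_congr rfl fun x _ => ?_
  simp [Finset.HasAntidiagonal.mem_antidiagonal.1 x.2]

lemma hasProd_double_series (hK : K.IsMultiplicative) (ha : a.IsMultiplicative)
    (hb : b.IsMultiplicative) :
    HasProd (fun p : Nat.Primes => ∑' d, ∑' q,
        K ((p : ℕ) ^ (d + q)) * (a ((p : ℕ) ^ d) * b ((p : ℕ) ^ q)))
      (∑' x : ℕ × ℕ, K (x.1 * x.2) * (a x.1 * b x.2)) := by
  have hprod := (hK.pmul (ha.mul hb)).eulerProduct_hasProd
    (hsum.of_nonneg_of_le (fun _ => norm_nonneg _) (norm_pmul_mul_apply_le K a b))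
  rw [tsum_double_series hsum]
  exact (funext fun p : Nat.Primes => tsum_pmul_mul_prime_pow hsum p.prop) ▸ hprod

lemma summable_norm_double_series_factor_sub_one (hK : K.IsMultiplicative)
    (ha : a.IsMultiplicative) (hb : b.IsMultiplicative) :
    Summable fun p : Nat.Primes => ‖(∑' d, ∑' q,
      K ((p : ℕ) ^ (d + q)) * (a ((p : ℕ) ^ d) * b ((p : ℕ) ^ q))) - 1‖ := by
  have hfactor := summable_norm_eulerFactor_sub_one (hK.pmul (ha.mul hb)).map_one
    (hsum.of_nonneg_of_le (fun _ => norm_nonneg _) (norm_pmul_mul_apply_le K a b))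
  exact hfactor.congr fun p => by rw [tsum_pmul_mul_prime_pow hsum p.prop]

end DoubleSeries

section LocalFactors

lemma tauSh_one (A : List ℂ) : tauSh A 1 = 1 := by
  induction A with
  | nil => simp [tauSh]
  | cons a A ih => simp [tauSh, ih]

variable {p : ℕ} (hp : p.Prime)
include hp

lemma tauSh_nil_prime_pow_succ (k : ℕ) : tauSh [] (p ^ (k + 1)) = 0 := by
  simp [tauSh, hp.ne_one]

lemma tauSh_cons_prime_pow (a : ℂ) (A : List ℂ) (k : ℕ) :
    tauSh (a :: A) (p ^ k) =
      ∑ i ∈ Finset.range (k + 1), ((p : ℂ) ^ (-a)) ^ i * tauSh A (p ^ (k - i)) := by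
  rw [tauSh, Nat.sum_divisors_prime_pow hp]
  refine Finset.sum_congr rfl fun i hi => ?_
  rw [natCast_pow_cpow, Nat.pow_div (Nat.lt_succ_iff.1 (Finset.mem_range.1 hi)) hp.pos]

lemma tauSh_cons_prime_pow_succ (a : ℂ) (A : List ℂ) (k : ℕ) :
    tauSh (a :: A) (p ^ (k + 1)) =
      tauSh A (p ^ (k + 1)) + (p : ℂ) ^ (-a) * tauSh (a :: A) (p ^ k) := by
  rw [tauSh_cons_prime_pow hp, tauSh_cons_prime_pow hp, Finset.sum_range_succ', Finset.mul_sum,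
    add_comm]
  congr 1
  · simp
  · refine Finset.sum_congr rfl fun i _ => ?_
    rw [pow_succ', mul_assoc, Nat.add_sub_add_right]

lemma tauSh_append_cons_prime_pow_succ (a : ℂ) (L M : List ℂ) (k : ℕ) :
    tauSh (L ++ a :: M) (p ^ (k + 1)) =
      tauSh (L ++ M) (p ^ (k + 1)) + (p : ℂ) ^ (-a) * tauSh (L ++ a :: M) (p ^ k) := by
  induction L generalizing k with
  | nil => exact tauSh_cons_prime_pow_succ hp a M k
  | cons b L ihL =>
    simp only [List.cons_append]
    induction k with
    | zero =>
      rw [tauSh_cons_prime_pow_succ hp, tauSh_cons_prime_pow_succ hp, ihL]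
      simp only [pow_zero, tauSh_one]
      ring
    | succ k ihk =>
      linear_combination tauSh_cons_prime_pow_succ hp b (L ++ a :: M) (k + 1)
        - tauSh_cons_prime_pow_succ hp b (L ++ M) (k + 1) + ihL (k + 1) + (p : ℂ) ^ (-b) * ihk
        - (p : ℂ) ^ (-a) * tauSh_cons_prime_pow_succ hp b (L ++ a :: M) k

lemma norm_prime_cpow_neg_le {θ : ℝ} {a : ℂ} (ha : -θ < a.re) :
    ‖(p : ℂ) ^ (-a)‖ ≤ (2 : ℝ) ^ (-(a.re + θ)) * (p : ℝ) ^ θ := by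
  have hp0 : (0 : ℝ) < p := by exact_mod_cast hp.pos
  have hp2 : (2 : ℝ) ≤ p := by exact_mod_cast hp.two_le
  calc ‖(p : ℂ) ^ (-a)‖ = (p : ℝ) ^ (-(a.re + θ)) * (p : ℝ) ^ θ := by
        rw [norm_natCast_cpow_of_pos hp.pos, ← Real.rpow_add hp0, neg_re]
        congr 1
        ring
    _ ≤ (2 : ℝ) ^ (-(a.re + θ)) * (p : ℝ) ^ θ := by
        have hle : (p : ℝ) ^ (-(a.re + θ)) ≤ (2 : ℝ) ^ (-(a.re + θ)) :=
          Real.rpow_le_rpow_of_nonpos two_pos hp2 (by linarith)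
        gcongr

end LocalFactors

lemma exists_norm_tauSh_prime_pow_le {θ : ℝ} {A : List ℂ} (hA : ∀ α ∈ A, -θ < α.re) :
    ∃ C : ℝ, 0 ≤ C ∧ ∀ p : ℕ, p.Prime → ∀ k : ℕ,
      ‖tauSh A (p ^ k)‖ ≤ C * ((p : ℝ) ^ θ) ^ k := by
  induction A with
  | nil =>
    refine ⟨1, zero_le_one, fun p hp k => ?_⟩
    cases k with
    | zero => simp [tauSh_one]
    | succ k =>
      rw [tauSh_nil_prime_pow_succ hp, norm_zero]
      positivity
  | cons a A ih =>
    obtain ⟨ha, hA⟩ := List.forall_mem_cons.1 hA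
    obtain ⟨C, hC, htau⟩ := ih hA
    set κ : ℝ := 2 ^ (-(a.re + θ))
    have hκ0 : 0 ≤ κ := by positivity
    have hκ1 : κ < 1 := Real.rpow_lt_one_of_one_lt_of_neg one_lt_two (by linarith)
    refine ⟨(1 - κ)⁻¹ * C, mul_nonneg (inv_nonneg.2 (by linarith)) hC, fun p hp k => ?_⟩
    set r : ℝ := (p : ℝ) ^ θ
    calc ‖tauSh (a :: A) (p ^ k)‖
        ≤ ∑ i ∈ Finset.range (k + 1), ‖((p : ℂ) ^ (-a)) ^ i * tauSh A (p ^ (k - i))‖ := by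
          rw [tauSh_cons_prime_pow hp]
          exact norm_sum_le _ _
      _ ≤ ∑ i ∈ Finset.range (k + 1), κ ^ i * (C * r ^ k) := by
          refine Finset.sum_le_sum fun i hi => ?_
          have hik : i ≤ k := Nat.lt_succ_iff.1 (Finset.mem_range.1 hi)
          rw [norm_mul, norm_pow, ← Nat.add_sub_of_le hik, pow_add r, Nat.add_sub_cancel_left]
          calc _ ≤ (κ * r) ^ i * (C * r ^ (k - i)) := by
                gcongr
                exacts [norm_prime_cpow_neg_le hp ha, htau p hp _]
            _ = _ := by ring
      _ ≤ (1 - κ)⁻¹ * (C * r ^ k) := by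
          rw [← Finset.sum_mul]
          gcongr
          rw [← tsum_geometric_of_lt_one hκ0 hκ1]
          exact (summable_geometric_of_lt_one hκ0 hκ1).sum_le_tsum _ fun i _ => pow_nonneg hκ0 i
      _ = (1 - κ)⁻¹ * C * r ^ k := (mul_assoc _ _ _).symm

lemma norm_shift_mul_pow_le {𝕜 : Type*} [NormedField 𝕜] {c : ℕ → 𝕜} {C r : ℝ}
    (hc : ∀ k, ‖c k‖ ≤ C * r ^ k) (x : 𝕜) (k j : ℕ) :
    ‖c (j + k) * x ^ j‖ ≤ C * r ^ k * (r * ‖x‖) ^ j := by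
  rw [norm_mul, norm_pow]
  calc ‖c (j + k)‖ * ‖x‖ ^ j ≤ C * r ^ (j + k) * ‖x‖ ^ j := by
        gcongr
        exact hc _
    _ = C * r ^ k * (r * ‖x‖) ^ j := by ring

lemma summable_shift_mul_pow {𝕜 : Type*} [NormedField 𝕜] [CompleteSpace 𝕜] {c : ℕ → 𝕜} {C r : ℝ}
    (hr : 0 ≤ r) (hc : ∀ k, ‖c k‖ ≤ C * r ^ k) {x : 𝕜} (hx : r * ‖x‖ < 1) (k : ℕ) :
    Summable fun j => c (j + k) * x ^ j :=
  .of_norm_bounded ((summable_geometric_of_lt_one (by positivity) hx).mul_left _)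
    (norm_shift_mul_pow_le hc x k)

lemma norm_tsum_shift_mul_pow_le {𝕜 : Type*} [NormedField 𝕜] {c : ℕ → 𝕜} {C r : ℝ} (hr : 0 ≤ r)
    (hc : ∀ k, ‖c k‖ ≤ C * r ^ k) {x : 𝕜} (hx : r * ‖x‖ < 1) (k : ℕ) :
    ‖∑' j, c (j + k) * x ^ j‖ ≤ C * r ^ k * (1 - r * ‖x‖)⁻¹ :=
  tsum_of_norm_bounded ((hasSum_geometric_of_lt_one (by positivity) hx).mul_left _)
    (norm_shift_mul_pow_le hc x k)

/-- The tail `∑_{j ≥ 0} τ_A(p^{j+k}) x^j`, at `x = p^{-s}` the series in the local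
factor of `g_A`. -/
noncomputable def tauTail (p : ℕ) (A : List ℂ) (x : ℂ) (k : ℕ) : ℂ :=
  ∑' j : ℕ, tauSh A (p ^ (j + k)) * x ^ j

/-- The tail `tauTail` multiplied by `∏_{α ∈ A} (1 - x p^{-α})`, the reciprocal of the full series
(the tail with `k = 0`). At `x = p^{-s}` it is `g_A(s, p^k)`. -/
noncomputable def normalizedTauTail (p : ℕ) (A : List ℂ) (x : ℂ) (k : ℕ) : ℂ :=
  (A.map fun α => 1 - x * (p : ℂ) ^ (-α)).prod * tauTail p A x k

section Tail

variable {p : ℕ} (hp : p.Prime) {θ : ℝ} {x : ℂ} (hx : (p : ℝ) ^ θ * ‖x‖ < 1)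
include hp hx

lemma summable_tauSh_mul_pow {A : List ℂ} (hA : ∀ α ∈ A, -θ < α.re) (k : ℕ) :
    Summable fun j : ℕ => tauSh A (p ^ (j + k)) * x ^ j := by
  obtain ⟨C, -, htau⟩ := exists_norm_tauSh_prime_pow_le hA
  exact summable_shift_mul_pow (c := fun k => tauSh A (p ^ k)) (by positivity) (htau p hp) hx k

lemma tauTail_zero {A : List ℂ} (hA : ∀ α ∈ A, -θ < α.re) :
    tauTail p A x 0 = 1 + x * tauTail p A x 1 := by
  have hsplit := (summable_tauSh_mul_pow hp hx hA 0).tsum_eq_zero_add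
  simp only [add_zero, pow_zero, tauSh_one, mul_one] at hsplit
  simp only [tauTail, add_zero, hsplit, ← tsum_mul_left, pow_succ']
  congr 2
  funext j
  ring

lemma tauTail_append_cons_succ {a : ℂ} {L M : List ℂ} (hA : ∀ α ∈ L ++ a :: M, -θ < α.re)
    (k : ℕ) : tauTail p (L ++ a :: M) x (k + 1) =
      tauTail p (L ++ M) x (k + 1) + (p : ℂ) ^ (-a) * tauTail p (L ++ a :: M) x k := by
  have hA' := forall_mem_append_of_forall_mem_append_cons hA
  rw [tauTail, tauTail, tauTail, ← tsum_mul_left,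
    ← (summable_tauSh_mul_pow hp hx hA' _).tsum_add
      ((summable_tauSh_mul_pow hp hx hA _).mul_left _)]
  refine tsum_congr fun j => ?_
  rw [← add_assoc, tauSh_append_cons_prime_pow_succ hp]
  ring

lemma one_sub_mul_tauTail_cons_zero {a : ℂ} {A : List ℂ} (hA : ∀ α ∈ a :: A, -θ < α.re) :
    (1 - x * (p : ℂ) ^ (-a)) * tauTail p (a :: A) x 0 = tauTail p A x 0 := by
  have hrec := tauTail_append_cons_succ hp hx (L := []) hA 0
  simp only [List.nil_append, zero_add] at hrec
  linear_combination tauTail_zero hp hx hA - tauTail_zero hp hx (List.forall_mem_cons.1 hA).2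
    + x * hrec

lemma normalizedTauTail_zero {A : List ℂ} (hA : ∀ α ∈ A, -θ < α.re) :
    normalizedTauTail p A x 0 = 1 := by
  induction A with
  | nil =>
    rw [normalizedTauTail, tauTail_zero hp hx hA]
    simp [tauTail, tauSh_nil_prime_pow_succ hp]
  | cons a A ih =>
    rw [normalizedTauTail, List.map_cons, List.prod_cons, mul_right_comm,
      one_sub_mul_tauTail_cons_zero hp hx hA, mul_comm]
    exact ih (List.forall_mem_cons.1 hA).2

end Tail

lemma norm_normalizing_prod_le {p : ℕ} (hp : p.Prime) {θ : ℝ} {x : ℂ}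
    (hx : (p : ℝ) ^ θ * ‖x‖ < 1) {A : List ℂ} (hA : ∀ α ∈ A, -θ < α.re) :
    ‖(A.map fun α => 1 - x * (p : ℂ) ^ (-α)).prod‖ ≤ 2 ^ A.length := by
  induction A with
  | nil => simp
  | cons a A ih =>
    obtain ⟨ha, hA⟩ := List.forall_mem_cons.1 hA
    have hp1 : (1 : ℝ) ≤ p := by exact_mod_cast hp.one_le
    have hpa : ‖(p : ℂ) ^ (-a)‖ ≤ (p : ℝ) ^ θ := by
      rw [norm_natCast_cpow_of_pos hp.pos]
      exact Real.rpow_le_rpow_of_exponent_le hp1 (by rw [neg_re]; linarith)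
    have hfactor : ‖1 - x * (p : ℂ) ^ (-a)‖ ≤ 2 := by
      calc ‖1 - x * (p : ℂ) ^ (-a)‖ ≤ 1 + ‖x‖ * ‖(p : ℂ) ^ (-a)‖ := by
            simpa only [norm_one, norm_mul] using norm_sub_le 1 (x * (p : ℂ) ^ (-a))
        _ ≤ 1 + ‖x‖ * (p : ℝ) ^ θ := by gcongr
        _ ≤ 2 := by linarith
    rw [List.map_cons, List.prod_cons, norm_mul, List.length_cons, pow_succ']
    gcongr
    exact ih hA

lemma exists_norm_normalizedTauTail_le {θ : ℝ} {A : List ℂ} (hA : ∀ α ∈ A, -θ < α.re) :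
    ∃ C : ℝ, 0 ≤ C ∧ ∀ p : ℕ, p.Prime → ∀ x : ℂ, (p : ℝ) ^ θ * ‖x‖ < 1 → ∀ k : ℕ,
      ‖normalizedTauTail p A x k‖ ≤ C * (1 - (p : ℝ) ^ θ * ‖x‖)⁻¹ * ((p : ℝ) ^ θ) ^ k := by
  obtain ⟨C, hC, htau⟩ := exists_norm_tauSh_prime_pow_le hA
  refine ⟨2 ^ A.length * C, by positivity, fun p hp x hx k => ?_⟩
  have htail : ‖tauTail p A x k‖ ≤ C * ((p : ℝ) ^ θ) ^ k * (1 - (p : ℝ) ^ θ * ‖x‖)⁻¹ :=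
    norm_tsum_shift_mul_pow_le (c := fun k => tauSh A (p ^ k)) (by positivity) (htau p hp) hx k
  calc ‖normalizedTauTail p A x k‖
      ≤ 2 ^ A.length * (C * ((p : ℝ) ^ θ) ^ k * (1 - (p : ℝ) ^ θ * ‖x‖)⁻¹) := by
        rw [normalizedTauTail, norm_mul]
        gcongr
        exact norm_normalizing_prod_le hp hx hA
    _ = 2 ^ A.length * C * (1 - (p : ℝ) ^ θ * ‖x‖)⁻¹ * ((p : ℝ) ^ θ) ^ k := by ring

lemma gSh_one (A : List ℂ) (s : ℂ) : gSh A s 1 = 1 := by simp [gSh]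

lemma gSh_mul_of_coprime (A : List ℂ) (s : ℂ) {m n : ℕ} (h : m.Coprime n) :
    gSh A s (m * n) = gSh A s m * gSh A s n := by
  rw [gSh, h.primeFactors_mul, Finset.prod_union h.disjoint_primeFactors]
  congr 1 <;> refine Finset.prod_congr rfl fun p hp => ?_
  · rw [Nat.factorization_eq_of_coprime_left h (by simpa using hp)]
  · rw [Nat.factorization_eq_of_coprime_right h (by simpa using hp)]

lemma gSh_prime_pow {p : ℕ} (hp : p.Prime) {θ : ℝ} {A : List ℂ} (hA : ∀ α ∈ A, -θ < α.re) {s : ℂ}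
    (hs : (p : ℝ) ^ θ * ‖(p : ℂ) ^ (-s)‖ < 1) (k : ℕ) :
    gSh A s (p ^ k) = normalizedTauTail p A ((p : ℂ) ^ (-s)) k := by
  have hp0 : (p : ℂ) ≠ 0 := by exact_mod_cast hp.ne_zero
  rcases Nat.eq_zero_or_pos k with rfl | hk
  · rw [pow_zero, gSh_one, normalizedTauTail_zero hp hs hA]
  · rw [gSh, Nat.primeFactors_prime_pow hk.ne' hp, Finset.prod_singleton, hp.factorization_pow,
      Finsupp.single_eq_same, normalizedTauTail, tauTail]
    simp only [← cpow_nat_mul, ← cpow_add _ _ hp0, ← sub_eq_add_neg, mul_neg, neg_mul]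

lemma sum_moebius_div_mul_gSh_mul_of_coprime (A : List ℂ) (s : ℂ) {m n d e : ℕ} (h : m.Coprime n)
    (hd : d ∣ m) (he : e ∣ n) :
    ∑ t ∈ (d * e).divisors, (ArithmeticFunction.moebius t : ℂ) / (t : ℂ) ^ s *
        gSh A s (m * n * t / (d * e)) =
      (∑ t ∈ d.divisors, (ArithmeticFunction.moebius t : ℂ) / (t : ℂ) ^ s *
        gSh A s (m * t / d)) *
      ∑ t ∈ e.divisors, (ArithmeticFunction.moebius t : ℂ) / (t : ℂ) ^ s *
        gSh A s (n * t / e) := by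
  have hde : d.Coprime e := h.of_dvd hd he
  refine sum_divisors_mul_of_coprime hde fun t ht u hu => ?_
  have htd := Nat.dvd_of_mem_divisors ht
  have hue := Nat.dvd_of_mem_divisors hu
  have hcop : (m * t / d).Coprime (n * u / e) := by
    have hleft : m * t / d ∣ m * m := by
      rw [Nat.mul_div_right_comm hd]
      exact mul_dvd_mul (Nat.div_dvd_of_dvd hd) (htd.trans hd)
    have hright : n * u / e ∣ n * n := by
      rw [Nat.mul_div_right_comm he]
      exact mul_dvd_mul (Nat.div_dvd_of_dvd he) (hue.trans he)
    exact Nat.Coprime.of_dvd hleft hright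
      (Nat.Coprime.mul_left (h.mul_right h) (h.mul_right h))
  have hsplit : m * n * (t * u) / (d * e) = (m * t / d) * (n * u / e) := by
    rw [mul_mul_mul_comm, Nat.div_mul_div_comm (hd.mul_right _) (he.mul_right _)]
  rw [hsplit, gSh_mul_of_coprime A s hcop,
    ArithmeticFunction.isMultiplicative_moebius.map_mul_of_coprime (hde.of_dvd htd hue),
    Nat.cast_mul, natCast_mul_natCast_cpow, Int.cast_mul]
  ring

lemma GSh_one (A : List ℂ) (s : ℂ) : GSh A s 1 = 1 := by simp [GSh, gSh_one]

lemma GSh_mul_of_coprime (A : List ℂ) (s : ℂ) {m n : ℕ} (h : m.Coprime n) :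
    GSh A s (m * n) = GSh A s m * GSh A s n := by
  refine sum_divisors_mul_of_coprime h fun d hd e he => ?_
  have hdm := Nat.dvd_of_mem_divisors hd
  have hen := Nat.dvd_of_mem_divisors he
  have hde : d.Coprime e := h.of_dvd hdm hen
  rw [sum_moebius_div_mul_gSh_mul_of_coprime A s h hdm hen,
    ArithmeticFunction.isMultiplicative_moebius.map_mul_of_coprime hde, Nat.totient_mul hde,
    Nat.cast_mul, Nat.cast_mul, natCast_mul_natCast_cpow, Int.cast_mul]
  ring

lemma GSh_prime_pow_succ {p : ℕ} (hp : p.Prime) (A : List ℂ) (s : ℂ) (k : ℕ) :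
    GSh A s (p ^ (k + 1)) = gSh A s (p ^ (k + 1)) - (p : ℂ) ^ s / ((p : ℂ) - 1) *
      (gSh A s (p ^ k) - (p : ℂ) ^ (-s) * gSh A s (p ^ (k + 1))) := by
  have hinner {f : ℕ → ℂ} (hf : ∀ i, f (p ^ (i + 2)) = 0) : ∑ d ∈ p.divisors, f d = f 1 + f p := by
    simpa only [zero_add, pow_one] using sum_divisors_prime_pow_succ_of_eq_zero hp 0 hf
  rw [GSh, sum_divisors_prime_pow_succ_of_eq_zero hp k
      fun i => by simp [moebius_prime_pow_add_two hp],
    hinner fun i => by simp [moebius_prime_pow_add_two hp]]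
  have hmul_div : p ^ (k + 1) * p / p = p ^ (k + 1) := Nat.mul_div_cancel _ hp.pos
  have hpow_div : p ^ (k + 1) / p = p ^ k := by rw [pow_succ, Nat.mul_div_cancel _ hp.pos]
  simp only [Nat.divisors_one, Finset.sum_singleton, ArithmeticFunction.moebius_apply_prime hp,
    Nat.totient_prime hp, hmul_div, hpow_div, mul_one, ArithmeticFunction.moebius_apply_one,
    Nat.totient_one, Nat.cast_one, one_cpow, Nat.div_one, Int.cast_one, Int.cast_neg,
    Nat.cast_sub hp.one_le, cpow_neg]
  ring

lemma normalizedTauTail_append_cons_succ {p : ℕ} (hp : p.Prime) {θ : ℝ} {x : ℂ}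
    (hx : (p : ℝ) ^ θ * ‖x‖ < 1) {a : ℂ} {L M : List ℂ} (hA : ∀ α ∈ L ++ a :: M, -θ < α.re)
    (k : ℕ) : normalizedTauTail p (L ++ a :: M) x (k + 1) =
      (1 - x * (p : ℂ) ^ (-a)) * normalizedTauTail p (L ++ M) x (k + 1) +
        (p : ℂ) ^ (-a) * normalizedTauTail p (L ++ a :: M) x k := by
  simp only [normalizedTauTail, tauTail_append_cons_succ hp hx hA, List.map_append,
    List.map_cons, List.prod_append, List.prod_cons]
  ring

-- At `s = 1 - a` the factor `1 - p^{-s-a}` is `1 - 1/p`, which cancels the `p / (p - 1)` produced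
-- by the totient, so the entry `a` disappears.
lemma GSh_append_cons_prime_pow {p : ℕ} (hp : p.Prime) {θ : ℝ} {a : ℂ} {L M : List ℂ}
    (hA : ∀ α ∈ L ++ a :: M, -θ < α.re) (ha : (p : ℝ) ^ θ * ‖(p : ℂ) ^ (-(1 - a))‖ < 1) (k : ℕ) :
    GSh (L ++ a :: M) (1 - a) (p ^ k) =
      normalizedTauTail p (L ++ M) ((p : ℂ) ^ (-(1 - a))) k := by
  have hp0 : (p : ℂ) ≠ 0 := by exact_mod_cast hp.ne_zero
  have hp1 : (p : ℂ) - 1 ≠ 0 := sub_ne_zero.2 (by exact_mod_cast hp.ne_one)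
  cases k with
  | zero =>
    have hA' := forall_mem_append_of_forall_mem_append_cons hA
    rw [pow_zero, GSh_one, normalizedTauTail_zero hp ha hA']
  | succ k =>
    have hxa : (p : ℂ) ^ (-(1 - a)) * (p : ℂ) ^ (-a) = (p : ℂ)⁻¹ := by
      rw [← cpow_add _ _ hp0, ← cpow_neg_one]
      congr 1
      ring
    have hpow : (p : ℂ) ^ (1 - a) = p * (p : ℂ) ^ (-a) := by
      rw [sub_eq_add_neg, cpow_add _ _ hp0, cpow_one]
    have hrec := normalizedTauTail_append_cons_succ hp ha hA k
    rw [hxa] at hrec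
    rw [GSh_prime_pow_succ hp, gSh_prime_pow hp hA ha, gSh_prime_pow hp hA ha, hpow]
    field_simp at hrec hxa ⊢
    linear_combination hrec + normalizedTauTail p (L ++ a :: M) (p ^ (-(1 - a))) (k + 1) * hxa

lemma exists_norm_GSh_le_of_isPrimePow {θ : ℝ} {a : ℂ} {L M : List ℂ}
    (hA : ∀ α ∈ L ++ a :: M, -θ < α.re) (ha : a.re + θ < 1) :
    ∃ C : ℝ, 0 ≤ C ∧ ∀ n : ℕ, IsPrimePow n →
      ‖GSh (L ++ a :: M) (1 - a) n‖ ≤ C * (n : ℝ) ^ θ := by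
  have hA' := forall_mem_append_of_forall_mem_append_cons hA
  obtain ⟨C, hC, htail⟩ := exists_norm_normalizedTauTail_le hA'
  set κ : ℝ := 2 ^ (-((1 - a).re - θ))
  have hκ : 0 < 1 - κ := by
    rw [sub_pos]
    exact Real.rpow_lt_one_of_one_lt_of_neg one_lt_two (by rw [sub_re, one_re]; linarith)
  refine ⟨C * (1 - κ)⁻¹, by positivity, fun n hn => ?_⟩
  obtain ⟨p, k, hp, -, rfl⟩ := (isPrimePow_nat_iff n).1 hn
  have hx : (p : ℝ) ^ θ * ‖(p : ℂ) ^ (-(1 - a))‖ ≤ κ := by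
    have hp0 : (0 : ℝ) < (p : ℝ) ^ θ := Real.rpow_pos_of_pos (by exact_mod_cast hp.pos) θ
    have hle := norm_prime_cpow_neg_le hp (θ := -θ) (a := 1 - a)
      (by rw [sub_re, one_re]; linarith)
    rw [Real.rpow_neg p.cast_nonneg, ← div_eq_mul_inv, le_div_iff₀ hp0, mul_comm] at hle
    exact hle
  have hx1 : (p : ℝ) ^ θ * ‖(p : ℂ) ^ (-(1 - a))‖ < 1 := hx.trans_lt (sub_pos.1 hκ)
  rw [GSh_append_cons_prime_pow hp hA hx1, Nat.cast_pow, ← Real.rpow_pow_comm p.cast_nonneg]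
  refine (htail p hp _ hx1 k).trans ?_
  gcongr

section MoebiusDoubleSeries

/-- The power function `n ↦ n ^ z` as an arithmetic function; it vanishes at `n = 0`, whatever the
value of `0 ^ z`. -/
noncomputable def cpowArith (z : ℂ) : ArithmeticFunction ℂ :=
  ⟨fun n => if n = 0 then 0 else (n : ℂ) ^ z, if_pos rfl⟩

lemma cpowArith_apply {n : ℕ} (hn : n ≠ 0) (z : ℂ) : cpowArith z n = (n : ℂ) ^ z := if_neg hn

lemma isMultiplicative_cpowArith (z : ℂ) : (cpowArith z).IsMultiplicative := by
  refine ArithmeticFunction.IsMultiplicative.iff_ne_zero.2 ⟨by simp [cpowArith_apply], ?_⟩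
  intro m n hm hn _
  rw [cpowArith_apply (mul_ne_zero hm hn), cpowArith_apply hm, cpowArith_apply hn, Nat.cast_mul,
    natCast_mul_natCast_cpow]

/-- The terms `μ(n) n ^ w` of the Dirichlet series of `1 / ζ` at `-w`. -/
noncomputable def moebiusCpowArith (w : ℂ) : ArithmeticFunction ℂ :=
  (ArithmeticFunction.moebius : ArithmeticFunction ℂ).pmul (cpowArith w)

lemma moebiusCpowArith_apply {n : ℕ} (hn : n ≠ 0) (w : ℂ) :
    moebiusCpowArith w n = ArithmeticFunction.moebius n * (n : ℂ) ^ w := by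
  rw [moebiusCpowArith, ArithmeticFunction.pmul_apply, cpowArith_apply hn,
    ArithmeticFunction.intCoe_apply]

lemma isMultiplicative_moebiusCpowArith (w : ℂ) : (moebiusCpowArith w).IsMultiplicative :=
  ArithmeticFunction.isMultiplicative_moebius.intCast.pmul (isMultiplicative_cpowArith w)

lemma norm_natCast_cpow_le_rpow {n : ℕ} (hn : n ≠ 0) {z : ℂ} {u : ℝ} (hz : z.re ≤ u) :
    ‖(n : ℂ) ^ z‖ ≤ (n : ℝ) ^ u := by
  rw [norm_natCast_cpow_of_pos (Nat.pos_of_ne_zero hn)]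
  exact Real.rpow_le_rpow_of_exponent_le (by exact_mod_cast Nat.one_le_iff_ne_zero.2 hn) hz

lemma sum_norm_moebius_divisors_of_isPrimePow {n : ℕ} (hn : IsPrimePow n) :
    ∑ d ∈ n.divisors, ‖(ArithmeticFunction.moebius d : ℂ)‖ = 2 := by
  obtain ⟨p, k, hp, hk, rfl⟩ := (isPrimePow_nat_iff n).1 hn
  obtain ⟨k, rfl⟩ := Nat.exists_eq_add_one.2 hk
  rw [sum_divisors_prime_pow_succ_of_eq_zero hp k fun i => by simp [moebius_prime_pow_add_two hp],
    ArithmeticFunction.moebius_apply_prime hp]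
  norm_num

lemma normArith_cpowArith_mul_moebiusCpowArith_le {z w : ℂ} {u : ℝ} (hz : z.re ≤ u)
    (hw : w.re ≤ u) {n : ℕ} (hn : IsPrimePow n) :
    (normArith (cpowArith z) * normArith (moebiusCpowArith w)) n ≤ 2 * (n : ℝ) ^ u := by
  have hterm (x : ℕ × ℕ) (hx : x ∈ n.divisorsAntidiagonal) :
      normArith (cpowArith z) x.1 * normArith (moebiusCpowArith w) x.2 ≤
        ‖(ArithmeticFunction.moebius x.2 : ℂ)‖ * (n : ℝ) ^ u := by
    have hx1 : x.1 ≠ 0 := Nat.left_ne_zero_of_mem_divisorsAntidiagonal hx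
    have hx2 : x.2 ≠ 0 := Nat.right_ne_zero_of_mem_divisorsAntidiagonal hx
    rw [normArith_apply, normArith_apply, cpowArith_apply hx1, moebiusCpowArith_apply hx2, norm_mul,
      ← (Nat.mem_divisorsAntidiagonal.1 hx).1, Nat.cast_mul,
      Real.mul_rpow x.1.cast_nonneg x.2.cast_nonneg, mul_left_comm]
    gcongr
    · exact norm_natCast_cpow_le_rpow hx1 hz
    · exact norm_natCast_cpow_le_rpow hx2 hw
  rw [ArithmeticFunction.mul_apply]
  refine (Finset.sum_le_sum hterm).trans_eq ?_
  rw [← Finset.sum_mul,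
    Nat.sum_divisorsAntidiagonal' fun _ d => ‖(ArithmeticFunction.moebius d : ℂ)‖,
    sum_norm_moebius_divisors_of_isPrimePow hn]

lemma mul_cpowArith_mul_moebiusCpowArith (K : ArithmeticFunction ℂ) (z w : ℂ) (m n : ℕ) :
    K (m * n) * (cpowArith z m * moebiusCpowArith w n) =
      ArithmeticFunction.moebius n * K (n * m) * (m : ℂ) ^ z * (n : ℂ) ^ w := by
  rcases eq_or_ne m 0 with rfl | hm
  · simp
  rcases eq_or_ne n 0 with rfl | hn
  · simp
  rw [cpowArith_apply hm, moebiusCpowArith_apply hn, mul_comm m n]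
  ring

lemma tsum_mul_cpowArith_mul_moebiusCpowArith_prime_pow (K : ArithmeticFunction ℂ) (z w : ℂ) {p : ℕ}
    (hp : p.Prime) (d : ℕ) :
    ∑' q, K (p ^ (d + q)) * (cpowArith z (p ^ d) * moebiusCpowArith w (p ^ q)) =
      ∑ q ∈ Finset.range 2, (-1 : ℂ) ^ q * K (p ^ (d + q)) * (p : ℂ) ^ (d * z + q * w) := by
  have hp0 : (p : ℂ) ≠ 0 := by exact_mod_cast hp.ne_zero
  have hpow (k : ℕ) : p ^ k ≠ 0 := pow_ne_zero k hp.ne_zero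
  have hzero (q : ℕ) (hq : q ∉ Finset.range 2) :
      K (p ^ (d + q)) * (cpowArith z (p ^ d) * moebiusCpowArith w (p ^ q)) = 0 := by
    obtain ⟨i, rfl⟩ := Nat.exists_eq_add_of_le' (not_lt.1 (Finset.mem_range.not.1 hq))
    simp [moebiusCpowArith_apply (hpow _), moebius_prime_pow_add_two hp]
  rw [tsum_eq_sum hzero]
  refine Finset.sum_congr rfl fun q hq => ?_
  have hmoebius : (ArithmeticFunction.moebius (p ^ q) : ℂ) = (-1) ^ q := by
    obtain rfl | rfl : q = 0 ∨ q = 1 := by have := Finset.mem_range.1 hq; omega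
    · simp
    · simp [ArithmeticFunction.moebius_apply_prime hp]
  rw [cpowArith_apply (hpow d), moebiusCpowArith_apply (hpow q), hmoebius, natCast_pow_cpow,
    natCast_pow_cpow, cpow_add _ _ hp0, cpow_nat_mul, cpow_nat_mul]
  ring

variable {K : ArithmeticFunction ℂ} (hK : K.IsMultiplicative) {C σ : ℝ}
  (hbound : ∀ n : ℕ, IsPrimePow n → ‖K n‖ ≤ C * (n : ℝ) ^ σ) {z w : ℂ}
  (hz : z.re + σ < -1) (hw : w.re + σ < -1)
include hK hbound hz hw

lemma summable_normArith_pmul_cpowArith_mul_moebiusCpowArith :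
    Summable ((normArith K).pmul (normArith (cpowArith z) * normArith (moebiusCpowArith w))) := by
  set u : ℝ := max z.re w.re
  have hu : u + σ < -1 := by
    rw [max_add]
    exact max_lt hz hw
  have hmajorant : Summable fun n : {n : ℕ // IsPrimePow n} => 2 * C * ((n : ℕ) : ℝ) ^ (u + σ) :=
    ((Real.summable_nat_rpow.2 hu).comp_injective Subtype.val_injective).mul_left (2 * C)
  refine summable_of_summable_isPrimePow ((isMultiplicative_normArith hK).pmul
      ((isMultiplicative_normArith (isMultiplicative_cpowArith z)).mul
        (isMultiplicative_normArith (isMultiplicative_moebiusCpowArith w))))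
    (fun n => mul_nonneg (norm_nonneg (K n)) (normArith_mul_normArith_nonneg _ _ n))
    (hmajorant.of_nonneg_of_le
      (fun n => mul_nonneg (norm_nonneg (K n)) (normArith_mul_normArith_nonneg _ _ n))
      fun n => ?_)
  calc ‖K n‖ * (normArith (cpowArith z) * normArith (moebiusCpowArith w)) n
      ≤ (C * ((n : ℕ) : ℝ) ^ σ) * (2 * ((n : ℕ) : ℝ) ^ u) :=
        mul_le_mul (hbound n n.2)
          (normArith_cpowArith_mul_moebiusCpowArith_le (le_max_left _ _) (le_max_right _ _) n.2)
          (normArith_mul_normArith_nonneg _ _ _) ((norm_nonneg _).trans (hbound n n.2))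
    _ = 2 * C * ((n : ℕ) : ℝ) ^ (u + σ) := by
        rw [Real.rpow_add (by exact_mod_cast n.2.pos)]
        ring

lemma summable_norm_moebius_double_series :
    Summable fun x : ℕ × ℕ =>
      ‖ArithmeticFunction.moebius x.2 * K (x.2 * x.1) * (x.1 : ℂ) ^ z * (x.2 : ℂ) ^ w‖ :=
  (summable_norm_double_series
    (summable_normArith_pmul_cpowArith_mul_moebiusCpowArith hK hbound hz hw)).congr fun x => by
      rw [mul_cpowArith_mul_moebiusCpowArith]

lemma hasProd_moebius_double_series :
    HasProd (fun p : Nat.Primes => ∑' d : ℕ, ∑ q ∈ Finset.range 2,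
        (-1 : ℂ) ^ q * K ((p : ℕ) ^ (d + q)) * ((p : ℕ) : ℂ) ^ (d * z + q * w))
      (∑' x : ℕ × ℕ,
        ArithmeticFunction.moebius x.2 * K (x.2 * x.1) * (x.1 : ℂ) ^ z * (x.2 : ℂ) ^ w) := by
  have hprod := hasProd_double_series
    (summable_normArith_pmul_cpowArith_mul_moebiusCpowArith hK hbound hz hw) hK
    (isMultiplicative_cpowArith z) (isMultiplicative_moebiusCpowArith w)
  have hlocal (p : Nat.Primes) :=
    tsum_mul_cpowArith_mul_moebiusCpowArith_prime_pow K z w p.prop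
  simpa only [mul_cpowArith_mul_moebiusCpowArith, hlocal] using hprod

lemma summable_norm_moebius_factor_sub_one :
    Summable fun p : Nat.Primes => ‖(∑' d : ℕ, ∑ q ∈ Finset.range 2,
      (-1 : ℂ) ^ q * K ((p : ℕ) ^ (d + q)) * ((p : ℕ) : ℂ) ^ (d * z + q * w)) - 1‖ := by
  have hfactor := summable_norm_double_series_factor_sub_one
    (summable_normArith_pmul_cpowArith_mul_moebiusCpowArith hK hbound hz hw) hK
    (isMultiplicative_cpowArith z) (isMultiplicative_moebiusCpowArith w)
  have hlocal (p : Nat.Primes) :=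
    tsum_mul_cpowArith_mul_moebiusCpowArith_prime_pow K z w p.prop
  simpa only [hlocal] using hfactor

end MoebiusDoubleSeries

section ZetaFactors

lemma summable_norm_mul_sub_one {ι R : Type*} [NormedRing R] {x y : ι → R}
    (hx : Summable fun i => ‖x i - 1‖) (hy : Summable fun i => ‖y i - 1‖) :
    Summable fun i => ‖x i * y i - 1‖ := by
  refine (((hx.mul_right (∑' i, ‖y i - 1‖)).add hx).add hy).of_nonneg_of_le
    (fun _ => norm_nonneg _) fun i => ?_
  calc ‖x i * y i - 1‖ = ‖(x i - 1) * (y i - 1) + (x i - 1) + (y i - 1)‖ := by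
        congr 1
        noncomm_ring
    _ ≤ ‖x i - 1‖ * ‖y i - 1‖ + ‖x i - 1‖ + ‖y i - 1‖ :=
        norm_add₃_le.trans (by gcongr; exact norm_mul_le _ _)
    _ ≤ ‖x i - 1‖ * (∑' i, ‖y i - 1‖) + ‖x i - 1‖ + ‖y i - 1‖ := by
        gcongr
        exact hy.le_tsum i fun _ _ => norm_nonneg _

lemma summable_norm_listProd_sub_one {ι κ R : Type*} [NormedRing R] {l : List κ} {f : κ → ι → R}
    (hf : ∀ a ∈ l, Summable fun i => ‖f a i - 1‖) :
    Summable fun i => ‖(l.map fun a => f a i).prod - 1‖ := by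
  induction l with
  | nil => simp [summable_zero]
  | cons a l ih =>
    obtain ⟨ha, hl⟩ := List.forall_mem_cons.1 hf
    simpa only [List.map_cons, List.prod_cons] using summable_norm_mul_sub_one ha (ih hl)

lemma hasProd_listProd {ι κ R : Type*} [CommMonoid R] [TopologicalSpace R] [ContinuousMul R]
    {l : List κ} {f : κ → ι → R} {z : κ → R} (hf : ∀ a ∈ l, HasProd (f a) (z a)) :
    HasProd (fun i => (l.map fun a => f a i).prod) (l.map z).prod := by
  induction l with
  | nil => simp [hasProd_one]
  | cons a l ih =>
    obtain ⟨ha, hl⟩ := List.forall_mem_cons.1 hf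
    simpa only [List.map_cons, List.prod_cons] using ha.mul (ih hl)

lemma hasProd_one_sub_prime_cpow_neg {z : ℂ} (hz : 1 < z.re) :
    HasProd (fun p : Nat.Primes => 1 - ((p : ℕ) : ℂ) ^ (-z)) (riemannZeta z)⁻¹ := by
  simpa only [inv_inv] using (riemannZeta_eulerProduct_hasProd hz).inv₀
    (riemannZeta_ne_zero_of_one_le_re hz.le)

lemma summable_norm_one_sub_prime_cpow_neg_sub_one {z : ℂ} (hz : 1 < z.re) :
    Summable fun p : Nat.Primes => ‖(1 - ((p : ℕ) : ℂ) ^ (-z)) - 1‖ :=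
  (Nat.Primes.summable_rpow.2 (neg_lt_neg hz)).congr fun p => by
    rw [sub_sub_cancel_left, norm_neg, norm_natCast_cpow_of_pos p.2.pos, neg_re]

variable {κ κ' : Type*} {L : List κ} {M : List κ'} {z : κ → κ' → ℂ}
  (hz : ∀ a ∈ L, ∀ b ∈ M, 1 < (z a b).re)
include hz

lemma hasProd_listProd_one_sub_prime_cpow_neg :
    HasProd (fun p : Nat.Primes =>
        (L.map fun a => (M.map fun b => 1 - ((p : ℕ) : ℂ) ^ (-z a b)).prod).prod)
      (L.map fun a => (M.map fun b => (riemannZeta (z a b))⁻¹).prod).prod :=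
  hasProd_listProd fun a ha => hasProd_listProd fun b hb =>
    hasProd_one_sub_prime_cpow_neg (hz a ha b hb)

lemma summable_norm_listProd_one_sub_prime_cpow_neg_sub_one :
    Summable fun p : Nat.Primes =>
      ‖(L.map fun a => (M.map fun b => 1 - ((p : ℕ) : ℂ) ^ (-z a b)).prod).prod - 1‖ :=
  summable_norm_listProd_sub_one fun a ha => summable_norm_listProd_sub_one fun b hb =>
    summable_norm_one_sub_prime_cpow_neg_sub_one (hz a ha b hb)

lemma listProd_riemannZeta_mul_listProd_inv :
    (L.map fun a => (M.map fun b => riemannZeta (z a b)).prod).prod *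
      (L.map fun a => (M.map fun b => (riemannZeta (z a b))⁻¹).prod).prod = 1 := by
  simp only [← List.prod_map_mul]
  refine List.prod_eq_one (List.forall_mem_map.2 fun a ha =>
    List.prod_eq_one (List.forall_mem_map.2 fun b hb => ?_))
  exact mul_inv_cancel₀ (riemannZeta_ne_zero_of_one_le_re (hz a ha b hb).le)

end ZetaFactors

/-- The arithmetic function `n ↦ G_A(s, n)`; the sum over divisors defining `GSh` is empty at
`n = 0`. -/
noncomputable def GArith (A : List ℂ) (s : ℂ) : ArithmeticFunction ℂ :=
  ⟨GSh A s, by simp [GSh]⟩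

@[simp]
lemma GArith_apply (A : List ℂ) (s : ℂ) (n : ℕ) : GArith A s n = GSh A s n := rfl

lemma isMultiplicative_GArith (A : List ℂ) (s : ℂ) : (GArith A s).IsMultiplicative :=
  ⟨GSh_one A s, GSh_mul_of_coprime A s⟩

lemma exists_norm_GArith_pmul_GArith_le {θ η : ℝ} {αh βh : ℂ} {L₁ L₂ M₁ M₂ : List ℂ}
    (hA : ∀ α ∈ L₁ ++ αh :: L₂, -θ < α.re) (hB : ∀ β ∈ M₁ ++ βh :: M₂, -η < β.re)
    (hα : αh.re + θ < 1) (hβ : βh.re + η < 1) :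
    ∃ C : ℝ, ∀ n : ℕ, IsPrimePow n →
      ‖(GArith (L₁ ++ αh :: L₂) (1 - αh)).pmul (GArith (M₁ ++ βh :: M₂) (1 - βh)) n‖ ≤
        C * (n : ℝ) ^ (θ + η) := by
  obtain ⟨C₁, hC₁, hGA⟩ := exists_norm_GSh_le_of_isPrimePow hA hα
  obtain ⟨C₂, -, hGB⟩ := exists_norm_GSh_le_of_isPrimePow hB hβ
  refine ⟨C₁ * C₂, fun n hn => ?_⟩
  rw [ArithmeticFunction.pmul_apply, norm_mul, Real.rpow_add (by exact_mod_cast hn.pos),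
    mul_mul_mul_comm]
  exact mul_le_mul (hGA n hn) (hGB n hn) (norm_nonneg _) (by positivity)

theorem stmt16_general (L₁ L₂ M₁ M₂ : List ℂ) (αh βh : ℂ) (θ η : ℝ)
    (hA : ∀ α ∈ L₁ ++ αh :: L₂, -θ < α.re)
    (hB : ∀ β ∈ M₁ ++ βh :: M₂, -η < β.re)
    (hαβ : αh.re + βh.re + θ + η < 1)
    (s : ℂ) (hs : θ + η < s.re) :
    Summable (fun x : ℕ × ℕ =>
      ‖(ArithmeticFunction.moebius x.2 : ℂ)
          * GSh (L₁ ++ αh :: L₂) (1 - αh) (x.2 * x.1)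
          * GSh (M₁ ++ βh :: M₂) (1 - βh) (x.2 * x.1)
          * (x.1 : ℂ) ^ (-1 - s) * (x.2 : ℂ) ^ (αh + βh - 2)‖) ∧
    Summable (fun p : Nat.Primes =>
      ‖((L₁ ++ L₂).map (fun a =>
            ((M₁ ++ M₂).map (fun b => 1 - ((p : ℕ) : ℂ) ^ (-1 - a - b - s))).prod)).prod *
          (∑' d : ℕ, ∑ q ∈ Finset.range 2,
            (-1 : ℂ) ^ q * GSh (L₁ ++ αh :: L₂) (1 - αh) ((p : ℕ) ^ (d + q))
              * GSh (M₁ ++ βh :: M₂) (1 - βh) ((p : ℕ) ^ (d + q))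
              * ((p : ℕ) : ℂ) ^ (-(d : ℂ) - (d : ℂ) * s - (q : ℂ) * (2 - αh - βh))) - 1‖) ∧
    ∑' x : ℕ × ℕ,
        (ArithmeticFunction.moebius x.2 : ℂ)
          * GSh (L₁ ++ αh :: L₂) (1 - αh) (x.2 * x.1)
          * GSh (M₁ ++ βh :: M₂) (1 - βh) (x.2 * x.1)
          * (x.1 : ℂ) ^ (-1 - s) * (x.2 : ℂ) ^ (αh + βh - 2)
      = ((L₁ ++ L₂).map (fun a =>
            ((M₁ ++ M₂).map (fun b => riemannZeta (1 + s + a + b))).prod)).prod *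
        ∏' p : Nat.Primes,
          (((L₁ ++ L₂).map (fun a =>
              ((M₁ ++ M₂).map (fun b => 1 - ((p : ℕ) : ℂ) ^ (-1 - a - b - s))).prod)).prod *
            ∑' d : ℕ, ∑ q ∈ Finset.range 2,
              (-1 : ℂ) ^ q * GSh (L₁ ++ αh :: L₂) (1 - αh) ((p : ℕ) ^ (d + q))
                * GSh (M₁ ++ βh :: M₂) (1 - βh) ((p : ℕ) ^ (d + q))
                * ((p : ℕ) : ℂ) ^ (-(d : ℂ) - (d : ℂ) * s - (q : ℂ) * (2 - αh - βh))) := by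
  have hα : -θ < αh.re := hA αh (by simp)
  have hβ : -η < βh.re := hB βh (by simp)
  obtain ⟨C, hK⟩ := exists_norm_GArith_pmul_GArith_le hA hB (by linarith) (by linarith)
  have hmul := (isMultiplicative_GArith (L₁ ++ αh :: L₂) (1 - αh)).pmul
    (isMultiplicative_GArith (M₁ ++ βh :: M₂) (1 - βh))
  have hd : (-1 - s).re + (θ + η) < -1 := by
    simp only [sub_re, neg_re, one_re]
    linarith
  have hq : (αh + βh - 2).re + (θ + η) < -1 := by
    simp only [add_re, sub_re, re_ofNat]
    linarith
  have hzeta : ∀ a ∈ L₁ ++ L₂, ∀ b ∈ M₁ ++ M₂, 1 < (1 + s + a + b).re := fun a ha b hb => by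
    have ha' := forall_mem_append_of_forall_mem_append_cons hA a ha
    have hb' := forall_mem_append_of_forall_mem_append_cons hB b hb
    simp only [add_re, one_re]
    linarith
  have hseries := summable_norm_moebius_double_series hmul hK hd hq
  have hfactor := summable_norm_mul_sub_one
    (summable_norm_listProd_one_sub_prime_cpow_neg_sub_one hzeta)
    (summable_norm_moebius_factor_sub_one hmul hK hd hq)
  have hprod := (hasProd_listProd_one_sub_prime_cpow_neg hzeta).mul
    (hasProd_moebius_double_series hmul hK hd hq)
  have hzexp (a b : ℂ) : -1 - a - b - s = -(1 + s + a + b) := by ring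
  have hpexp (d q : ℕ) : -(d : ℂ) - d * s - q * (2 - αh - βh) =
      d * (-1 - s) + q * (αh + βh - 2) := by ring
  simp only [ArithmeticFunction.pmul_apply, GArith_apply, ← mul_assoc] at hseries hfactor hprod
  simp only [hzexp, hpexp]
  refine ⟨hseries, hfactor, ?_⟩
  rw [hprod.tprod_eq, ← mul_assoc, listProd_riemannZeta_mul_listProd_inv hzeta, one_mul]

/-- Let A, B be tuples all of whose entries have |ℜ| < 1/16, with
distinguished entries α̂ ∈ A, β̂ ∈ B, A′ = A minus α̂, B′ = B minus β̂. Then for every s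
with ℜs > 1/4 the double series
Σ_{d≥1} Σ_{q≥1} μ(q) G_A(1−α̂,qd) G_B(1−β̂,qd) d^{−1−s} q^{−2+α̂+β̂}
converges absolutely and equals
∏_{a∈A′,b∈B′} ζ(1+s+a+b) ×
∏_p [ ∏_{a∈A′,b∈B′}(1−p^{−1−a−b−s}) Σ_{d≥0} Σ_{q=0}^{1} (−1)^q G_A(1−α̂,p^{d+q})
      G_B(1−β̂,p^{d+q}) p^{−d−ds−q(2−α̂−β̂)} ],
the product over primes converging absolutely.  (The sum over all of ℕ × ℕ below agrees
with the sum over d,q ≥ 1 since the terms with d = 0 or q = 0 vanish.) -/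
theorem stmt16 (L₁ L₂ M₁ M₂ : List ℂ) (αh βh : ℂ)
    (hA : ∀ α ∈ L₁ ++ αh :: L₂, |α.re| < 1/16)
    (hB : ∀ β ∈ M₁ ++ βh :: M₂, |β.re| < 1/16)
    (s : ℂ) (hs : 1/4 < s.re) :
    Summable (fun x : ℕ × ℕ =>
      ‖(ArithmeticFunction.moebius x.2 : ℂ)
          * GSh (L₁ ++ αh :: L₂) (1 - αh) (x.2 * x.1)
          * GSh (M₁ ++ βh :: M₂) (1 - βh) (x.2 * x.1)
          * (x.1 : ℂ) ^ (-1 - s) * (x.2 : ℂ) ^ (αh + βh - 2)‖) ∧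
    Summable (fun p : Nat.Primes =>
      ‖((L₁ ++ L₂).map (fun a =>
            ((M₁ ++ M₂).map (fun b => 1 - ((p : ℕ) : ℂ) ^ (-1 - a - b - s))).prod)).prod *
          (∑' d : ℕ, ∑ q ∈ Finset.range 2,
            (-1 : ℂ) ^ q * GSh (L₁ ++ αh :: L₂) (1 - αh) ((p : ℕ) ^ (d + q))
              * GSh (M₁ ++ βh :: M₂) (1 - βh) ((p : ℕ) ^ (d + q))
              * ((p : ℕ) : ℂ) ^ (-(d : ℂ) - (d : ℂ) * s - (q : ℂ) * (2 - αh - βh))) - 1‖) ∧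
    ∑' x : ℕ × ℕ,
        (ArithmeticFunction.moebius x.2 : ℂ)
          * GSh (L₁ ++ αh :: L₂) (1 - αh) (x.2 * x.1)
          * GSh (M₁ ++ βh :: M₂) (1 - βh) (x.2 * x.1)
          * (x.1 : ℂ) ^ (-1 - s) * (x.2 : ℂ) ^ (αh + βh - 2)
      = ((L₁ ++ L₂).map (fun a =>
            ((M₁ ++ M₂).map (fun b => riemannZeta (1 + s + a + b))).prod)).prod *
        ∏' p : Nat.Primes,
          (((L₁ ++ L₂).map (fun a =>
              ((M₁ ++ M₂).map (fun b => 1 - ((p : ℕ) : ℂ) ^ (-1 - a - b - s))).prod)).prod *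
            ∑' d : ℕ, ∑ q ∈ Finset.range 2,
              (-1 : ℂ) ^ q * GSh (L₁ ++ αh :: L₂) (1 - αh) ((p : ℕ) ^ (d + q))
                * GSh (M₁ ++ βh :: M₂) (1 - βh) ((p : ℕ) ^ (d + q))
                * ((p : ℕ) : ℂ) ^ (-(d : ℂ) - (d : ℂ) * s - (q : ℂ) * (2 - αh - βh))) := by
  refine stmt16_general L₁ L₂ M₁ M₂ αh βh (1 / 16) (1 / 16) (fun α hα => (abs_lt.1 (hA α hα)).1)
    (fun β hβ => (abs_lt.1 (hB β hβ)).1) ?_ s (by linarith)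
  linarith [(abs_lt.1 (hA αh (by simp))).2, (abs_lt.1 (hB βh (by simp))).2]
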